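/- Let I ⊆ (0,∞) be an open interval, let k ∈ ℝ, and let w : I → (0,∞) be three times differentiable. Define D_r f(r) = f'(r) + (2/r) f(r), L_k f = − w^{-k} ( w^{1+k} D_r f )', and L_k^* h = − w^{-k} D_r ( w^{1+k} h' ). Then for every three times differentiable f : I → ℝ and every r ∈ I: ( D_r (L_k f) )(r) = ( L_{1+k}^* (D_r f) )(r) − (1+k)·( w''(r) + (2/r) w'(r) )·(D_r f)(r), and ( ∂_r (L_k^* f) )(r) = ( L_{1+k} (∂_r f) )(r) − (1+k)·( w''(r) − (2/r) w'(r) )·(∂_r f)(r). -/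

import Mathlib

/-- The radial divergence `D_r f (r) = f'(r) + (2/r) f(r)`. -/
noncomputable def Dr (f : ℝ → ℝ) : ℝ → ℝ := fun r => deriv f r + (2 / r) * f r

/-- The degenerate elliptic operator `L_k f = -w^{-k} ∂_r (w^{1+k} D_r f)` of (4.170). -/
noncomputable def Lop (w : ℝ → ℝ) (k : ℝ) (f : ℝ → ℝ) : ℝ → ℝ :=
  fun r => -((w r) ^ (-k) * deriv (fun ρ => (w ρ) ^ (1 + k) * Dr f ρ) r)

/-- The degenerate elliptic operator `L_k^* h = -w^{-k} D_r (w^{1+k} ∂_r h)` of (4.171). -/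
noncomputable def Lstar (w : ℝ → ℝ) (k : ℝ) (f : ℝ → ℝ) : ℝ → ℝ :=
  fun r => -((w r) ^ (-k) * Dr (fun ρ => (w ρ) ^ (1 + k) * deriv f ρ) r)

/-!
The operators factor as `L_k = -B_k D_r` and `L_k^* = -E_k ∂_r`, where
`B_k g = w^{-k} (w^{1+k} g)' = (1+k) w' g + w g'` and
`E_k g = w^{-k} D_r (w^{1+k} g) = (1+k) w' g + w D_r g`. Differentiating these expanded forms gives
`D_r B_k = E_{1+k} ∂_r + (1+k) (w'' + (2/r) w')` and
`∂_r E_k = B_{1+k} D_r + (1+k) (w'' - (2/r) w')`: the derivative falling on the factor `w` of the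
principal term raises the index by one. Apply the first to `D_r f` and the second to `∂_r f`.
-/

open scoped Topology

/-- The operator `B_k`: the weighted derivative `w^{-k} ∂_r (w^{1+k} g)`, so that
`L_k = -B_k D_r`. -/
noncomputable def weightedDeriv (w : ℝ → ℝ) (k : ℝ) (g : ℝ → ℝ) : ℝ → ℝ :=
  fun r => w r ^ (-k) * deriv (fun ρ => w ρ ^ (1 + k) * g ρ) r

/-- The operator `E_k`: the weighted radial divergence `w^{-k} D_r (w^{1+k} g)`, so that
`L_k^* = -E_k ∂_r`. -/
noncomputable def weightedDr (w : ℝ → ℝ) (k : ℝ) (g : ℝ → ℝ) : ℝ → ℝ :=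
  fun r => w r ^ (-k) * Dr (fun ρ => w ρ ^ (1 + k) * g ρ) r

theorem Lop_eq_neg_weightedDeriv_Dr (w : ℝ → ℝ) (k : ℝ) (f : ℝ → ℝ) :
    Lop w k f = -weightedDeriv w k (Dr f) :=
  rfl

theorem Lstar_eq_neg_weightedDr_deriv (w : ℝ → ℝ) (k : ℝ) (f : ℝ → ℝ) :
    Lstar w k f = -weightedDr w k (deriv f) :=
  rfl

section RadialDivergence

theorem Dr_neg (f : ℝ → ℝ) : Dr (-f) = -Dr f := by
  funext r
  simp only [Dr, deriv.neg, Pi.neg_apply]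
  ring

variable {f : ℝ → ℝ} {r : ℝ}

theorem differentiableAt_Dr (hr : r ≠ 0) (hf : DifferentiableAt ℝ f r)
    (hf' : DifferentiableAt ℝ (deriv f) r) : DifferentiableAt ℝ (Dr f) r :=
  hf'.fun_add (((differentiableAt_const 2).fun_div differentiableAt_id hr).fun_mul hf)

theorem deriv_Dr (hr : r ≠ 0) (hf : DifferentiableAt ℝ f r)
    (hf' : DifferentiableAt ℝ (deriv f) r) :
    deriv (Dr f) r = Dr (deriv f) r - 2 / r ^ 2 * f r := by
  have h_div : HasDerivAt (fun ρ : ℝ => 2 / ρ) (-2 / r ^ 2) r := by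
    simpa using (hasDerivAt_const r (2 : ℝ)).fun_div (hasDerivAt_id' r) hr
  have h_Dr : HasDerivAt (Dr f) _ r := hf'.hasDerivAt.fun_add (h_div.fun_mul hf.hasDerivAt)
  rw [h_Dr.deriv, Dr]
  ring

theorem differentiableAt_deriv_Dr (hr : r ≠ 0) (hf : ∀ᶠ ρ in 𝓝 r, DifferentiableAt ℝ f ρ)
    (hf' : ∀ᶠ ρ in 𝓝 r, DifferentiableAt ℝ (deriv f) ρ)
    (hf'' : DifferentiableAt ℝ (deriv (deriv f)) r) :
    DifferentiableAt ℝ (deriv (Dr f)) r := by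
  have h_deriv : deriv (Dr f) =ᶠ[𝓝 r] fun ρ => Dr (deriv f) ρ - 2 / ρ ^ 2 * f ρ := by
    filter_upwards [eventually_ne_nhds hr, hf, hf'] with ρ hρ hfρ hfρ' using deriv_Dr hρ hfρ hfρ'
  have h_div : DifferentiableAt ℝ (fun ρ : ℝ => 2 / ρ ^ 2) r :=
    (differentiableAt_const 2).fun_div (differentiableAt_pow 2) (pow_ne_zero 2 hr)
  exact ((differentiableAt_Dr hr hf'.self_of_nhds hf'').fun_sub
    (h_div.fun_mul hf.self_of_nhds)).congr_of_eventuallyEq h_deriv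

end RadialDivergence

section WeightedOperators

variable {w g : ℝ → ℝ} {r : ℝ} (k : ℝ)

theorem weightedDeriv_apply (hw_pos : 0 < w r) (hw : DifferentiableAt ℝ w r)
    (hg : DifferentiableAt ℝ g r) :
    weightedDeriv w k g r = (1 + k) * deriv w r * g r + w r * deriv g r := by
  have h_pow := hw.hasDerivAt.rpow_const (p := 1 + k) (Or.inl hw_pos.ne')
  have h_ne : w r ^ k ≠ 0 := (Real.rpow_pos_of_pos hw_pos k).ne'
  rw [weightedDeriv, (h_pow.fun_mul hg.hasDerivAt).deriv, add_sub_cancel_left,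
    Real.rpow_add hw_pos, Real.rpow_one, Real.rpow_neg hw_pos.le]
  field_simp

theorem weightedDr_eq_weightedDeriv_add (hw_pos : 0 < w r) :
    weightedDr w k g r = weightedDeriv w k g r + 2 / r * (w r * g r) := by
  have h_pow : w r ^ (-k) * w r ^ (1 + k) = w r := by
    rw [← Real.rpow_add hw_pos, neg_add_cancel_comm_assoc, Real.rpow_one]
  simp only [weightedDr, weightedDeriv, Dr]
  linear_combination 2 / r * g r * h_pow

theorem weightedDr_apply (hw_pos : 0 < w r) (hw : DifferentiableAt ℝ w r)
    (hg : DifferentiableAt ℝ g r) :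
    weightedDr w k g r = (1 + k) * deriv w r * g r + w r * Dr g r := by
  rw [weightedDr_eq_weightedDeriv_add k hw_pos, weightedDeriv_apply k hw_pos hw hg, Dr]
  ring

theorem deriv_mul_deriv_add_mul {h : ℝ → ℝ} (hw : DifferentiableAt ℝ w r)
    (hw' : DifferentiableAt ℝ (deriv w) r) (hg : DifferentiableAt ℝ g r)
    (hh : DifferentiableAt ℝ h r) :
    deriv (fun ρ => (1 + k) * deriv w ρ * g ρ + w ρ * h ρ) r =
      (1 + k) * (deriv (deriv w) r * g r + deriv w r * deriv g r) +
        (deriv w r * h r + w r * deriv h r) := by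
  have h_first := (hw'.hasDerivAt.const_mul (1 + k)).fun_mul hg.hasDerivAt
  rw [(h_first.fun_add (hw.hasDerivAt.fun_mul hh.hasDerivAt)).deriv]
  ring

theorem Dr_weightedDeriv (hw_pos : 0 < w r) (hw : ∀ᶠ ρ in 𝓝 r, DifferentiableAt ℝ w ρ)
    (hw' : DifferentiableAt ℝ (deriv w) r) (hg : ∀ᶠ ρ in 𝓝 r, DifferentiableAt ℝ g ρ)
    (hg' : DifferentiableAt ℝ (deriv g) r) :
    Dr (weightedDeriv w k g) r =
      weightedDr w (1 + k) (deriv g) r +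
        (1 + k) * (deriv (deriv w) r + 2 / r * deriv w r) * g r := by
  have hw_r := hw.self_of_nhds
  have h_expand : weightedDeriv w k g =ᶠ[𝓝 r]
      fun ρ => (1 + k) * deriv w ρ * g ρ + w ρ * deriv g ρ := by
    filter_upwards [hw_r.continuousAt.eventually_const_lt hw_pos, hw, hg] with ρ hpos hwρ hgρ
      using weightedDeriv_apply k hpos hwρ hgρ
  rw [Dr, h_expand.deriv_eq, h_expand.eq_of_nhds,
    deriv_mul_deriv_add_mul k hw_r hw' hg.self_of_nhds hg',
    weightedDr_apply (1 + k) hw_pos hw_r hg', Dr]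
  ring

theorem deriv_weightedDr (hr : r ≠ 0) (hw_pos : 0 < w r) (hw : ∀ᶠ ρ in 𝓝 r, DifferentiableAt ℝ w ρ)
    (hw' : DifferentiableAt ℝ (deriv w) r) (hg : ∀ᶠ ρ in 𝓝 r, DifferentiableAt ℝ g ρ)
    (hg' : DifferentiableAt ℝ (deriv g) r) :
    deriv (weightedDr w k g) r =
      weightedDeriv w (1 + k) (Dr g) r +
        (1 + k) * (deriv (deriv w) r - 2 / r * deriv w r) * g r := by
  have hw_r := hw.self_of_nhds
  have h_Dr := differentiableAt_Dr hr hg.self_of_nhds hg'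
  have h_expand : weightedDr w k g =ᶠ[𝓝 r]
      fun ρ => (1 + k) * deriv w ρ * g ρ + w ρ * Dr g ρ := by
    filter_upwards [hw_r.continuousAt.eventually_const_lt hw_pos, hw, hg] with ρ hpos hwρ hgρ
      using weightedDr_apply k hpos hwρ hgρ
  have h_deriv : deriv g r = Dr g r - 2 / r * g r := by rw [Dr, add_sub_cancel_right]
  rw [h_expand.deriv_eq, deriv_mul_deriv_add_mul k hw_r hw' hg.self_of_nhds h_Dr,
    weightedDeriv_apply (1 + k) hw_pos hw_r h_Dr, h_deriv]
  ring

end WeightedOperators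

theorem commutation_rules_Dr_L_general {w f : ℝ → ℝ} {r : ℝ} (k : ℝ) (hr : r ≠ 0)
    (hw_pos : 0 < w r) (hw : ∀ᶠ ρ in 𝓝 r, DifferentiableAt ℝ w ρ)
    (hw' : DifferentiableAt ℝ (deriv w) r) (hf : ∀ᶠ ρ in 𝓝 r, DifferentiableAt ℝ f ρ)
    (hf' : ∀ᶠ ρ in 𝓝 r, DifferentiableAt ℝ (deriv f) ρ)
    (hf'' : DifferentiableAt ℝ (deriv (deriv f)) r) :
    Dr (Lop w k f) r =
        Lstar w (1 + k) (Dr f) r -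
          (1 + k) * (deriv (deriv w) r + 2 / r * deriv w r) * Dr f r ∧
      deriv (Lstar w k f) r =
        Lop w (1 + k) (deriv f) r -
          (1 + k) * (deriv (deriv w) r - 2 / r * deriv w r) * deriv f r := by
  have h_Dr : ∀ᶠ ρ in 𝓝 r, DifferentiableAt ℝ (Dr f) ρ := by
    filter_upwards [eventually_ne_nhds hr, hf, hf'] with ρ hρ hfρ hfρ'
      using differentiableAt_Dr hρ hfρ hfρ'
  have h_Dr' := differentiableAt_deriv_Dr hr hf hf' hf''
  simp only [Lop_eq_neg_weightedDeriv_Dr, Lstar_eq_neg_weightedDr_deriv, Dr_neg, deriv.neg,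
    Pi.neg_apply]
  rw [Dr_weightedDeriv k hw_pos hw hw' h_Dr h_Dr', deriv_weightedDr k hr hw_pos hw hw' hf' hf'',
    neg_add', neg_add']
  exact ⟨rfl, rfl⟩

/-- The commutation rules (B.411) and (B.412):
`D_r (L_k f) = L_{1+k}^* (D_r f) - (1+k)(w'' + (2/r) w') D_r f` and
`∂_r (L_k^* f) = L_{1+k} (∂_r f) - (1+k)(w'' - (2/r) w') ∂_r f`. -/
theorem commutation_rules_Dr_L (I : Set ℝ) (hI : IsOpen I) (hIpos : I ⊆ Set.Ioi 0)
    (k : ℝ) (w : ℝ → ℝ) (hw_pos : ∀ r ∈ I, 0 < w r)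
    (hw_d1 : ∀ r ∈ I, DifferentiableAt ℝ w r)
    (hw_d2 : ∀ r ∈ I, DifferentiableAt ℝ (deriv w) r)
    (hw_d3 : ∀ r ∈ I, DifferentiableAt ℝ (deriv (deriv w)) r)
    (f : ℝ → ℝ)
    (hf_d1 : ∀ r ∈ I, DifferentiableAt ℝ f r)
    (hf_d2 : ∀ r ∈ I, DifferentiableAt ℝ (deriv f) r)
    (hf_d3 : ∀ r ∈ I, DifferentiableAt ℝ (deriv (deriv f)) r) :
    ∀ r ∈ I,
      Dr (Lop w k f) r =
        Lstar w (1 + k) (Dr f) r -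
          (1 + k) * (deriv (deriv w) r + (2 / r) * deriv w r) * Dr f r ∧
      deriv (Lstar w k f) r =
        Lop w (1 + k) (deriv f) r -
          (1 + k) * (deriv (deriv w) r - (2 / r) * deriv w r) * deriv f r := by
  intro r hr
  have h_mem : ∀ᶠ ρ in 𝓝 r, ρ ∈ I := hI.eventually_mem hr
  exact commutation_rules_Dr_L_general k (hIpos hr).ne' (hw_pos r hr) (h_mem.mono hw_d1)
    (hw_d2 r hr) (h_mem.mono hf_d1) (h_mem.mono hf_d2) (hf_d3 r hr)
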